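/- Let K be a nonempty compact Hausdorff topological space, let n ≥ 1, r ≥ 1, and let φ : K × S^{n-1} → M_r(ℂ) be a continuous map such that φ(x, -ξ) = φ(x, ξ) for all (x, ξ) and such that φ(x, ξ) is an invertible matrix for every (x, ξ). Then for every ε > 0 there exist a natural number s ≥ 1 and continuous maps a_α : K → M_r(ℂ), indexed by the (finitely many) multi-indices α ∈ ℕⁿ with |α| = 2s, such that the map h(x, ξ) = Σ_{|α| = 2s} a_α(x) ξ^α satisfies ‖h(x, ξ) − φ(x, ξ)‖ < ε for all (x, ξ) ∈ K × S^{n-1}, and h(x, ξ) is invertible for every x ∈ K and every ξ ∈ ℝⁿ with ξ ≠ 0. -/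

import Mathlib

attribute [local instance] Matrix.linftyOpNormedRing Matrix.linftyOpNormedAlgebra

/-!
A family `φ : K × S^{n-1} → E` is the same thing as a map `ψ : S^{n-1} → C(K, E)`, so the parameter
space disappears into the coefficients: it suffices to approximate even continuous maps from the
sphere to a normed space `F` by forms with coefficients in `F`. A partition of unity and the
Stone–Weierstrass theorem approximate `ψ` by `∑ i, pᵢ(ξ) cᵢ` with `pᵢ` real polynomials and
`cᵢ ∈ F`. As `ψ` is even, the approximation survives replacing each `pᵢ` by its even part, and on
the sphere every component of the even part may be multiplied by a power of `∑ j, ξⱼ² = 1` to bring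
all of them to the same even degree. Units form an open set and `φ` has compact range, so a close
enough approximation is invertible on the sphere, hence, by homogeneity, away from the origin.
-/

section StoneWeierstrass

variable {X ι : Type*} [TopologicalSpace X]

theorem aeval_continuousMap_apply {R : Type*} [CommSemiring R] [TopologicalSpace R]
    [IsTopologicalSemiring R] (u : ι → C(X, R)) (p : MvPolynomial ι R) (y : X) :
    MvPolynomial.aeval u p y = MvPolynomial.eval (fun j ↦ u j y) p :=
  MvPolynomial.comp_aeval_apply (f := u) (ContinuousMap.evalAlgHom R R y) p

variable [CompactSpace X] [T2Space X] {F : Type*} [SeminormedAddCommGroup F] [NormedSpace ℝ F]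

theorem exists_sum_smul_near (f : C(X, F)) {ε : ℝ} (hε : 0 < ε) :
    ∃ (t : Finset X) (ρ : t → C(X, ℝ)), ∀ y, ‖∑ x, ρ x y • f x - f y‖ < ε := by
  obtain ⟨t, ht⟩ := isCompact_univ.elim_finite_subcover (fun x ↦ f ⁻¹' Metric.ball (f x) ε)
    (fun x ↦ Metric.isOpen_ball.preimage f.continuous)
    fun x _ ↦ Set.mem_iUnion.2 ⟨x, Metric.mem_ball_self hε⟩
  obtain ⟨ρ, hρ⟩ := PartitionOfUnity.exists_isSubordinate isClosed_univ
    (fun x : t ↦ f ⁻¹' Metric.ball (f x) ε)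
    (fun x ↦ Metric.isOpen_ball.preimage f.continuous) (by rwa [Set.iUnion_subtype])
  refine ⟨t, ρ, fun y ↦ ?_⟩
  have near_of_ne_zero : ∀ x : t, ρ x y ≠ 0 → f x ∈ Metric.ball (f y) ε := fun x hx ↦
    Metric.mem_ball_comm.1 (hρ x (subset_tsupport _ hx))
  rw [← mem_ball_iff_norm, ← finsum_eq_sum_of_fintype]
  exact ρ.finsum_smul_mem_convex (g := fun x _ ↦ f x) (Set.mem_univ y) near_of_ne_zero
    (convex_ball _ _)

theorem exists_sum_smul_near_of_separatesPoints (A : Subalgebra ℝ C(X, ℝ))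
    (hA : A.SeparatesPoints) (f : C(X, F)) {ε : ℝ} (hε : 0 < ε) :
    ∃ (t : Finset X) (g : t → A), ∀ y, ‖∑ x, (g x : C(X, ℝ)) y • f x - f y‖ < ε := by
  obtain ⟨t, ρ, hρ⟩ := exists_sum_smul_near f (half_pos hε)
  let C := ∑ x : t, ‖f x‖
  have C_add_one_pos : 0 < C + 1 := by positivity
  choose g hg using fun x ↦
    ContinuousMap.exists_mem_subalgebra_near_continuousMap_of_separatesPoints A hA (ρ x)
      (ε / 2 / (C + 1)) (by positivity)
  refine ⟨t, g, fun y ↦ ?_⟩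
  have g_near_ρ : ‖∑ x, (g x : C(X, ℝ)) y • f x - ∑ x, ρ x y • f x‖ ≤ ε / 2 := calc
    _ = ‖∑ x, ((g x : C(X, ℝ)) y - ρ x y) • f x‖ := by
      simp only [sub_smul, Finset.sum_sub_distrib]
    _ ≤ ∑ x : t, ε / 2 / (C + 1) * ‖f x‖ := by
      refine norm_sum_le_of_le _ fun x _ ↦ (norm_smul_le _ _).trans ?_
      gcongr
      exact (((g x : C(X, ℝ)) - ρ x).norm_coe_le_norm y).trans (hg x).le
    _ = ε / 2 * (C / (C + 1)) := by
      rw [← Finset.mul_sum, div_mul_eq_mul_div, mul_div_assoc]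
    _ ≤ ε / 2 := mul_le_of_le_one_right (half_pos hε).le
      (div_le_one_of_le₀ (by linarith) C_add_one_pos.le)
  calc ‖∑ x, (g x : C(X, ℝ)) y • f x - f y‖
    _ ≤ ‖∑ x, (g x : C(X, ℝ)) y • f x - ∑ x, ρ x y • f x‖ + ‖∑ x, ρ x y • f x - f y‖ :=
      norm_sub_le_norm_sub_add_norm_sub _ _ _
    _ < ε / 2 + ε / 2 := add_lt_add_of_le_of_lt g_near_ρ (hρ y)
    _ = ε := add_halves ε

theorem exists_sum_eval_smul_near (u : ι → C(X, ℝ))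
    (hu : Function.Injective fun (y : X) j ↦ u j y) (f : C(X, F)) {ε : ℝ} (hε : 0 < ε) :
    ∃ (t : Finset X) (p : t → MvPolynomial ι ℝ),
      ∀ y, ‖∑ x, MvPolynomial.eval (fun j ↦ u j y) (p x) • f x - f y‖ < ε := by
  have separates : (MvPolynomial.aeval (R := ℝ) u).range.SeparatesPoints := fun y z hyz ↦ by
    obtain ⟨j, hj⟩ := Function.ne_iff.1 (hu.ne hyz)
    exact ⟨u j, ⟨u j, ⟨MvPolynomial.X j, MvPolynomial.aeval_X u j⟩, rfl⟩, hj⟩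
  obtain ⟨t, g, hg⟩ := exists_sum_smul_near_of_separatesPoints _ separates f hε
  choose p hp using fun x ↦ (g x).2
  refine ⟨t, p, fun y ↦ ?_⟩
  simp only [← aeval_continuousMap_apply]
  convert hg y
  exact hp _

end StoneWeierstrass

section Form

open MvPolynomial

variable {ι R M : Type*} [Fintype ι] [DecidableEq ι] [CommSemiring R] [AddCommMonoid M]
  [Module R M]

/-- The value at `v` of the form `∑ α, v ^ α • a α` of degree `d` with coefficients `a α` in a
module, the sum being over the multi-indices `α` with `|α| = d`. Of the family `a` only these
coefficients matter. -/
def homogeneousForm (d : ℕ) (a : (ι → ℕ) → M) (v : ι → R) : M :=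
  ∑ α ∈ Finset.piAntidiag Finset.univ d, (∏ j, v j ^ α j) • a α

theorem homogeneousForm_smul (d : ℕ) (a : (ι → ℕ) → M) (c : R) (v : ι → R) :
    homogeneousForm d a (c • v) = c ^ d • homogeneousForm d a v := by
  simp only [homogeneousForm, Finset.smul_sum, smul_smul]
  refine Finset.sum_congr rfl fun α hα ↦ ?_
  rw [← (Finset.mem_piAntidiag.1 hα).1, ← Finset.prod_pow_eq_pow_sum, ← Finset.prod_mul_distrib]
  simp only [Pi.smul_apply, smul_eq_mul, mul_pow]

theorem homogeneousForm_continuousMap_apply {K : Type*} [TopologicalSpace K] [TopologicalSpace M]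
    [ContinuousAdd M] [ContinuousConstSMul R M] (d : ℕ) (a : (ι → ℕ) → C(K, M)) (v : ι → R)
    (x : K) : homogeneousForm d a v x = homogeneousForm d (a · x) v := by
  simp only [homogeneousForm, ContinuousMap.sum_apply, ContinuousMap.smul_apply]

theorem eval_eq_homogeneousForm {p : MvPolynomial ι R} {d : ℕ} (hp : p.IsHomogeneous d)
    (v : ι → R) :
    eval v p = homogeneousForm d (fun α ↦ p.coeff (Finsupp.equivFunOnFinite.symm α)) v := by
  rw [eval_eq']
  refine Finset.sum_of_injOn (fun β j ↦ β j) DFunLike.coe_injective.injOn ?_ ?_ fun β _ ↦ ?_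
  · intro β hβ
    have degree_eq := hp.degree_eq_sum_deg_support hβ
    simpa [degree_eq] using (Finset.sum_subset β.support.subset_univ (by simp)).symm
  · intro α _ hα
    have coeff_eq_zero : p.coeff (Finsupp.equivFunOnFinite.symm α) = 0 :=
      notMem_support_iff.1 fun h ↦ hα ⟨_, h, rfl⟩
    simp only [coeff_eq_zero, smul_zero]
  · have symm_coe : Finsupp.equivFunOnFinite.symm (fun j ↦ β j) = β := DFunLike.coe_injective rfl
    simp only [symm_coe, smul_eq_mul, mul_comm]

theorem sum_eval_smul_eq_homogeneousForm {κ : Type*} [Fintype κ] {p : κ → MvPolynomial ι R} {d : ℕ}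
    (hp : ∀ i, (p i).IsHomogeneous d) (c : κ → M) (v : ι → R) :
    ∑ i, eval v (p i) • c i = homogeneousForm d
      (fun α ↦ ∑ i, (p i).coeff (Finsupp.equivFunOnFinite.symm α) • c i) v := by
  simp only [eval_eq_homogeneousForm (hp _), homogeneousForm, Finset.sum_smul, Finset.smul_sum,
    smul_smul, smul_eq_mul]
  exact Finset.sum_comm

end Form

section EvenHomogenization

open MvPolynomial

theorem sum_range_two_mul {M : Type*} [AddCommMonoid M] (f : ℕ → M) (m : ℕ) :
    ∑ i ∈ Finset.range (2 * m), f i = ∑ k ∈ Finset.range m, (f (2 * k) + f (2 * k + 1)) := by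
  induction m with
  | zero => rfl
  | succ m ih => rw [Finset.sum_range_succ, mul_add_one, Finset.sum_range_succ,
      Finset.sum_range_succ, ih, add_assoc]

variable {ι R : Type*}

theorem sum_homogeneousComponent_of_totalDegree_lt [CommSemiring R] {p : MvPolynomial ι R}
    {m : ℕ} (hp : p.totalDegree < m) : ∑ i ∈ Finset.range m, homogeneousComponent i p = p := by
  rw [Finset.eventually_constant_sum (fun i hi ↦ homogeneousComponent_eq_zero i p hi) hp,
    sum_homogeneousComponent]

variable [Fintype ι]

/-- The components of `p` of degree `2k ≤ 2s`, brought to the common degree `2s` by powers of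
`∑ j, X j ^ 2` and added up. Where that quadratic form takes the value `1`, this has the same values
as the even part of `p`, provided that `2s` is at least the degree of `p`. -/
noncomputable def evenHomogenization [CommSemiring R] (s : ℕ) (p : MvPolynomial ι R) :
    MvPolynomial ι R :=
  ∑ k ∈ Finset.range (s + 1), (∑ j, X j ^ 2) ^ (s - k) * homogeneousComponent (2 * k) p

theorem isHomogeneous_evenHomogenization [CommSemiring R] (s : ℕ) (p : MvPolynomial ι R) :
    (evenHomogenization s p).IsHomogeneous (2 * s) := by
  refine IsHomogeneous.sum _ _ _ fun k hk ↦ ?_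
  have quadratic : (∑ j, X j ^ 2 : MvPolynomial ι R).IsHomogeneous 2 :=
    IsHomogeneous.sum _ _ _ fun j _ ↦ isHomogeneous_X_pow j 2
  convert (quadratic.pow (s - k)).mul (homogeneousComponent_isHomogeneous (2 * k) p) using 1
  have := Finset.mem_range.1 hk
  omega

theorem two_mul_eval_evenHomogenization [CommRing R] {s : ℕ} {p : MvPolynomial ι R}
    (hp : p.totalDegree ≤ 2 * s) {v : ι → R} (hv : ∑ j, v j ^ 2 = 1) :
    2 * eval v (evenHomogenization s p) = eval v p + eval (-v) p := by
  have eval_eq_sum (w : ι → R) : eval w p = ∑ k ∈ Finset.range (s + 1),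
      (eval w (homogeneousComponent (2 * k) p) + eval w (homogeneousComponent (2 * k + 1) p)) := by
    rw [← sum_range_two_mul (fun i ↦ eval w (homogeneousComponent i p)), ← map_sum,
      sum_homogeneousComponent_of_totalDegree_lt (by omega)]
  have eval_neg_component (i : ℕ) : eval (-v) (homogeneousComponent i p)
      = (-1) ^ i * eval v (homogeneousComponent i p) := by
    classical
    simp only [eval_eq_homogeneousForm (homogeneousComponent_isHomogeneous i p),
      ← neg_one_smul R v, homogeneousForm_smul, smul_eq_mul]
  rw [eval_eq_sum, eval_eq_sum, ← Finset.sum_add_distrib, evenHomogenization, map_sum,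
    Finset.mul_sum]
  refine Finset.sum_congr rfl fun k _ ↦ ?_
  simp only [map_mul, map_pow, map_sum, eval_X, hv, one_pow, one_mul, eval_neg_component,
    (even_two_mul k).neg_one_pow, (odd_two_mul_add_one k).neg_one_pow]
  ring

theorem sum_eval_evenHomogenization_smul [CommRing R] [Invertible (2 : R)] {M κ : Type*}
    [AddCommGroup M] [Module R M] [Fintype κ] {s : ℕ} {p : κ → MvPolynomial ι R}
    (hp : ∀ i, (p i).totalDegree ≤ 2 * s) (c : κ → M) {v : ι → R} (hv : ∑ j, v j ^ 2 = 1) :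
    ∑ i, eval v (evenHomogenization s (p i)) • c i =
      midpoint R (∑ i, eval v (p i) • c i) (∑ i, eval (-v) (p i) • c i) := by
  simp only [midpoint_eq_smul_add, ← Finset.sum_add_distrib, ← add_smul,
    ← two_mul_eval_evenHomogenization (hp _) hv, Finset.smul_sum, smul_smul,
    invOf_mul_cancel_left']

end EvenHomogenization

section Sphere

variable {ι : Type*} [Fintype ι] [DecidableEq ι]

open Metric

theorem exists_homogeneousForm_near_of_even {F : Type*} [SeminormedAddCommGroup F]
    [NormedSpace ℝ F] (f : C(sphere (0 : EuclideanSpace ℝ ι) 1, F)) (hf : ∀ ξ, f (-ξ) = f ξ)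
    {ε : ℝ} (hε : 0 < ε) :
    ∃ s, 1 ≤ s ∧ ∃ a : (ι → ℕ) → F,
      ∀ ξ : sphere (0 : EuclideanSpace ℝ ι) 1, ‖homogeneousForm (2 * s) a ⇑ξ.1 - f ξ‖ < ε := by
  obtain ⟨t, p, hp⟩ := exists_sum_eval_smul_near
    (fun j ↦ ⟨fun ξ : sphere (0 : EuclideanSpace ℝ ι) 1 ↦ ξ.1 j, by fun_prop⟩)
    (fun ξ η h ↦ Subtype.ext (PiLp.ext (congrFun h))) f hε
  obtain ⟨s, hs⟩ := Finite.bddAbove_range fun x ↦ (p x).totalDegree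
  have degree_le (x) : (p x).totalDegree ≤ 2 * (s + 1) := (hs ⟨x, rfl⟩).trans (by omega)
  refine ⟨s + 1, Nat.le_add_left 1 s, fun α ↦ ∑ x, (evenHomogenization (s + 1) (p x)).coeff
    (Finsupp.equivFunOnFinite.symm α) • f x, fun ξ ↦ ?_⟩
  have sum_sq : ∑ j, ξ.1 j ^ 2 = 1 := by
    rw [← EuclideanSpace.real_norm_sq_eq, norm_eq_of_mem_sphere, one_pow]
  rw [← sum_eval_smul_eq_homogeneousForm fun x ↦ isHomogeneous_evenHomogenization (s + 1) (p x),
    sum_eval_evenHomogenization_smul degree_le _ sum_sq, ← mem_ball_iff_norm]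
  exact (convex_ball _ _).midpoint_mem (mem_ball_iff_norm.2 (hp ξ))
    (mem_ball_iff_norm.2 (hf ξ ▸ hp (-ξ)))

theorem exists_pos_forall_norm_sub_lt_isUnit {X E : Type*} [TopologicalSpace X] [CompactSpace X]
    [NormedRing E] [CompleteSpace E] {φ : X → E} (hφ : Continuous φ) (hu : ∀ p, IsUnit (φ p)) :
    ∃ δ > 0, ∀ p b, ‖b - φ p‖ < δ → IsUnit b := by
  obtain ⟨δ, hδ, thickening_subset⟩ := (isCompact_range hφ).exists_thickening_subset_open
    Units.isOpen (Set.range_subset_iff.2 hu)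
  refine ⟨δ, hδ, fun p b hb ↦ thickening_subset (mem_thickening_iff.2 ⟨φ p, ⟨p, rfl⟩, ?_⟩)⟩
  rwa [dist_eq_norm]

theorem isUnit_homogeneousForm_of_sphere {E : Type*} [Ring E] [Algebra ℝ E] {d : ℕ}
    {a : (ι → ℕ) → E}
    (ha : ∀ ξ : sphere (0 : EuclideanSpace ℝ ι) 1, IsUnit (homogeneousForm d a ⇑ξ.1))
    {v : EuclideanSpace ℝ ι} (hv : v ≠ 0) : IsUnit (homogeneousForm d a ⇑v) := by
  have norm_ne_zero : ‖v‖ ≠ 0 := norm_ne_zero_iff.2 hv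
  let ξ : sphere (0 : EuclideanSpace ℝ ι) 1 := ⟨‖v‖⁻¹ • v, by simp [norm_smul, norm_ne_zero]⟩
  have v_eq : ⇑v = ‖v‖ • ⇑ξ.1 := by simp [ξ, smul_smul, norm_ne_zero]
  rw [v_eq, homogeneousForm_smul, Algebra.smul_def]
  exact ((IsUnit.mk0 _ (pow_ne_zero d norm_ne_zero)).map (algebraMap ℝ E)).mul (ha ξ)

theorem statement0_general {K E : Type*} [TopologicalSpace K] [CompactSpace K] [NormedRing E]
    [NormedAlgebra ℝ E] [CompleteSpace E] (φ : C(K × sphere (0 : EuclideanSpace ℝ ι) 1, E))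
    (hφeven : ∀ x ξ, φ (x, -ξ) = φ (x, ξ)) (hφinv : ∀ p, IsUnit (φ p)) {ε : ℝ} (hε : 0 < ε) :
    ∃ s, 1 ≤ s ∧ ∃ a : (ι → ℕ) → C(K, E),
      (∀ (x : K) (ξ : sphere (0 : EuclideanSpace ℝ ι) 1),
        ‖homogeneousForm (2 * s) (a · x) ⇑ξ.1 - φ (x, ξ)‖ < ε) ∧
      ∀ (x : K) (ξ : EuclideanSpace ℝ ι), ξ ≠ 0 →
        IsUnit (homogeneousForm (2 * s) (a · x) ⇑ξ) := by
  obtain ⟨δ, hδ, isUnit_of_near⟩ := exists_pos_forall_norm_sub_lt_isUnit φ.continuous hφinv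
  obtain ⟨s, hs, a, ha⟩ := exists_homogeneousForm_near_of_even (φ.comp .prodSwap).curry
    (fun ξ ↦ ContinuousMap.ext fun x ↦ hφeven x ξ) (lt_min hε hδ)
  have near (x : K) (ξ : sphere (0 : EuclideanSpace ℝ ι) 1) :
      ‖homogeneousForm (2 * s) (a · x) ⇑ξ.1 - φ (x, ξ)‖ < min ε δ := by
    rw [← homogeneousForm_continuousMap_apply]
    exact (ContinuousMap.norm_coe_le_norm _ x).trans_lt (ha ξ)
  exact ⟨s, hs, a, fun x ξ ↦ (near x ξ).trans_le (min_le_left ε δ), fun x _ ↦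
    isUnit_homogeneousForm_of_sphere fun ξ ↦
      isUnit_of_near (x, ξ) _ ((near x ξ).trans_le (min_le_right ε δ))⟩

end Sphere

/-- Lemma 5.1 (cf. Remark 5.2): every continuous family, parametrized by a nonempty compact
Hausdorff space `K`, of even invertible matrix functions on the unit sphere `S^{n-1}` can be
uniformly approximated by (restrictions to the sphere of) even-degree homogeneous matrix
polynomials in `ξ` which are invertible for all `ξ ≠ 0`. -/
theorem statement0 {K : Type*} [TopologicalSpace K] [CompactSpace K] [T2Space K] [Nonempty K]
    {n r : ℕ} (hn : 1 ≤ n) (hr : 1 ≤ r)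
    (φ : K × Metric.sphere (0 : EuclideanSpace ℝ (Fin n)) 1 → Matrix (Fin r) (Fin r) ℂ)
    (hφc : Continuous φ)
    (hφeven : ∀ (x : K) (ξ η : Metric.sphere (0 : EuclideanSpace ℝ (Fin n)) 1),
      (ξ : EuclideanSpace ℝ (Fin n)) = -(η : EuclideanSpace ℝ (Fin n)) → φ (x, ξ) = φ (x, η))
    (hφinv : ∀ p, IsUnit (φ p))
    (ε : ℝ) (hε : 0 < ε) :
    ∃ (s : ℕ), 1 ≤ s ∧
      ∃ (A : Finset (Fin n → ℕ)) (a : (Fin n → ℕ) → K → Matrix (Fin r) (Fin r) ℂ),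
        (∀ α ∈ A, (∑ j, α j) = 2 * s) ∧
        (∀ α ∈ A, Continuous (a α)) ∧
        (∀ (x : K) (ξ : Metric.sphere (0 : EuclideanSpace ℝ (Fin n)) 1),
          ‖(∑ α ∈ A, (∏ j, ((ξ : EuclideanSpace ℝ (Fin n)) j : ℂ) ^ α j) • a α x)
            - φ (x, ξ)‖ < ε) ∧
        (∀ (x : K) (ξ : EuclideanSpace ℝ (Fin n)), ξ ≠ 0 →
          IsUnit (∑ α ∈ A, (∏ j, ((ξ j : ℂ)) ^ α j) • a α x)) := by
  obtain ⟨s, hs, a, near, inv⟩ :=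
    statement0_general ⟨φ, hφc⟩ (fun x ξ ↦ hφeven x (-ξ) ξ rfl) hφinv hε
  refine ⟨s, hs, Finset.piAntidiag Finset.univ (2 * s), fun α ↦ a α, by simp,
    fun α _ ↦ (a α).continuous, ?_⟩
  simpa only [homogeneousForm, ← Complex.ofReal_pow, ← Complex.ofReal_prod, Complex.coe_smul]
    using ⟨near, inv⟩
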